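/- arXiv:2602.10247 — 2 statements merged into one kernel-verified Lean document; each statement's English description precedes it below -/
import Mathlib

section
/- Let X : Ω → ℝ^n and E : Ω → ℝ^m be independent random vectors with X distributed as the multivariate Gaussian N(x₀, Γ), where Γ ∈ ℝ^{n×n} is symmetric positive definite, and E distributed as N(0, Σ), where Σ ∈ ℝ^{m×m} is symmetric positive definite. Let A ∈ ℝ^{n×m} and define B = Aᵀ X + E. Then for (law of B)-almost every b ∈ ℝ^m, the regular conditional distribution of X given B = b is the multivariate Gaussian N(x̄, C) with mean x̄ = x₀ + Γ A (Aᵀ Γ A + Σ)⁻¹ (b − Aᵀ x₀) and covariance C = Γ − Γ A (Aᵀ Γ A + Σ)⁻¹ Aᵀ Γ. -/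
open MeasureTheory ProbabilityTheory Matrix

/-- The multivariate Gaussian law `N(m, C)` on `ι → ℝ`, characterized by its characteristic
function `t ↦ exp(i tᵀ m − tᵀ C t / 2)`. -/
def IsGaussianLaw {ι : Type*} [Fintype ι] (μ : Measure (ι → ℝ)) (m : ι → ℝ)
    (C : Matrix ι ι ℝ) : Prop :=
  IsProbabilityMeasure μ ∧
    ∀ t : ι → ℝ,
      (∫ x, Complex.exp (Complex.I * ((t ⬝ᵥ x : ℝ) : ℂ)) ∂μ) =
        Complex.exp (Complex.I * ((t ⬝ᵥ m : ℝ) : ℂ) - ((t ⬝ᵥ C.mulVec t : ℝ) : ℂ) / 2)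

lemma pglm_quad {n m : ℕ} (Γ : Matrix (Fin n) (Fin n) ℝ) (S : Matrix (Fin m) (Fin m) ℝ)
    (hG : Γᵀ = Γ) (hS : Sᵀ = S) (A : Matrix (Fin n) (Fin m) ℝ)
    (M : Matrix (Fin m) (Fin m) ℝ) (hM : M = Aᵀ * Γ * A + S) (hu : IsUnit M.det)
    (K : Matrix (Fin n) (Fin m) ℝ) (hK : K = Γ * A * M⁻¹) (t : Fin n → ℝ) (v w : Fin m → ℝ)
    (hw : w = v - Kᵀ *ᵥ t) :
    (t + A *ᵥ w) ⬝ᵥ Γ *ᵥ (t + A *ᵥ w) + w ⬝ᵥ S *ᵥ w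
      = t ⬝ᵥ (Γ - K * Aᵀ * Γ) *ᵥ t + v ⬝ᵥ M *ᵥ v := by
  have hMt : Mᵀ = M := by
    rw [hM]; simp [Matrix.transpose_mul, hG, hS, Matrix.mul_assoc]
  have hKM : K * M = Γ * A := by
    rw [hK, Matrix.mul_assoc, Matrix.nonsing_inv_mul _ hu, Matrix.mul_one]
  have hMK : M * Kᵀ = Aᵀ * Γ := by
    have := congrArg Matrix.transpose hKM
    simpa [Matrix.transpose_mul, hMt, hG] using this
  have adj : ∀ {k l : ℕ} (N : Matrix (Fin k) (Fin l) ℝ) (a : Fin k → ℝ) (b : Fin l → ℝ),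
      a ⬝ᵥ N *ᵥ b = (Nᵀ *ᵥ a) ⬝ᵥ b := by
    intro k l N a b
    rw [Matrix.dotProduct_mulVec, Matrix.mulVec_transpose]
  have symM : ∀ a b, a ⬝ᵥ M *ᵥ b = b ⬝ᵥ M *ᵥ a := by
    intro a b
    rw [adj, hMt, dotProduct_comm]
  have h1 : (A *ᵥ w) ⬝ᵥ Γ *ᵥ t = w ⬝ᵥ M *ᵥ (Kᵀ *ᵥ t) := by
    rw [Matrix.mulVec_mulVec, hMK, ← Matrix.mulVec_mulVec, adj Aᵀ, Matrix.transpose_transpose]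
  have h2 : t ⬝ᵥ Γ *ᵥ (A *ᵥ w) = w ⬝ᵥ M *ᵥ (Kᵀ *ᵥ t) := by
    rw [← h1, adj, hG, dotProduct_comm]
  have h3 : (A *ᵥ w) ⬝ᵥ Γ *ᵥ (A *ᵥ w) + w ⬝ᵥ S *ᵥ w = w ⬝ᵥ M *ᵥ w := by
    rw [hM, Matrix.add_mulVec, dotProduct_add, ← Matrix.mulVec_mulVec, ← Matrix.mulVec_mulVec,
      adj Aᵀ, Matrix.transpose_transpose]
  have h4 : t ⬝ᵥ (Γ - K * Aᵀ * Γ) *ᵥ t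
      = t ⬝ᵥ Γ *ᵥ t - (Kᵀ *ᵥ t) ⬝ᵥ M *ᵥ (Kᵀ *ᵥ t) := by
    rw [Matrix.sub_mulVec, dotProduct_sub, Matrix.mul_assoc, ← hMK, ← Matrix.mulVec_mulVec,
      ← Matrix.mulVec_mulVec, adj K]
  rw [h4, Matrix.mulVec_add, add_dotProduct, dotProduct_add, dotProduct_add, h1, h2]
  have h5 : w ⬝ᵥ M *ᵥ w = v ⬝ᵥ M *ᵥ v - 2 * (v ⬝ᵥ M *ᵥ (Kᵀ *ᵥ t))
      + (Kᵀ *ᵥ t) ⬝ᵥ M *ᵥ (Kᵀ *ᵥ t) := by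
    rw [hw, Matrix.mulVec_sub, sub_dotProduct, dotProduct_sub, dotProduct_sub,
      symM (Kᵀ *ᵥ t) v]
    ring
  have h6 : w ⬝ᵥ M *ᵥ (Kᵀ *ᵥ t) = v ⬝ᵥ M *ᵥ (Kᵀ *ᵥ t)
      - (Kᵀ *ᵥ t) ⬝ᵥ M *ᵥ (Kᵀ *ᵥ t) := by
    conv_lhs => rw [hw, sub_dotProduct]
  linarith

lemma pglm_joint {Ω : Type*} [MeasurableSpace Ω] (Pr : Measure Ω)
    {n m : ℕ} (X : Ω → Fin n → ℝ) (E : Ω → Fin m → ℝ)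
    (hX : Measurable X) (hE : Measurable E) (hXE : IndepFun X E Pr)
    (x₀ : Fin n → ℝ) (Γ : Matrix (Fin n) (Fin n) ℝ) (S : Matrix (Fin m) (Fin m) ℝ)
    (hlawX : IsGaussianLaw (Measure.map X Pr) x₀ Γ)
    (hlawE : IsGaussianLaw (Measure.map E Pr) 0 S) (s : Fin n → ℝ) (u : Fin m → ℝ) :
    ∫ ω, Complex.exp (Complex.I * ((s ⬝ᵥ X ω + u ⬝ᵥ E ω : ℝ) : ℂ)) ∂Pr
      = Complex.exp (Complex.I * ((s ⬝ᵥ x₀ : ℝ) : ℂ)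
          - ((s ⬝ᵥ Γ *ᵥ s + u ⬝ᵥ S *ᵥ u : ℝ) : ℂ) / 2) := by
  have c1 : Continuous fun x : Fin n → ℝ => Complex.exp (Complex.I * ((s ⬝ᵥ x : ℝ) : ℂ)) := by
    fun_prop
  have c2 : Continuous fun x : Fin m → ℝ => Complex.exp (Complex.I * ((u ⬝ᵥ x : ℝ) : ℂ)) := by
    fun_prop
  have h1 := hlawX.2 s
  have h2 := hlawE.2 u
  rw [integral_map hX.aemeasurable c1.aestronglyMeasurable] at h1
  rw [integral_map hE.aemeasurable c2.aestronglyMeasurable] at h2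
  have h3 := hXE.integral_fun_comp_mul_comp hX.aemeasurable hE.aemeasurable
    c1.aestronglyMeasurable c2.aestronglyMeasurable
  have h4 : ∀ ω, Complex.exp (Complex.I * ((s ⬝ᵥ X ω + u ⬝ᵥ E ω : ℝ) : ℂ))
      = Complex.exp (Complex.I * ((s ⬝ᵥ X ω : ℝ) : ℂ))
        * Complex.exp (Complex.I * ((u ⬝ᵥ E ω : ℝ) : ℂ)) := by
    intro ω
    rw [← Complex.exp_add]; push_cast; ring_nf
  simp_rw [h4]
  rw [h3, h1, h2, ← Complex.exp_add]
  simp only [dotProduct_zero]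
  push_cast
  ring_nf

lemma pglm_dual {n : ℕ} (L : StrongDual ℝ (Fin n → ℝ)) :
    ∃ t : Fin n → ℝ, ∀ x, L x = t ⬝ᵥ x := by
  refine ⟨fun i => L (Pi.single i 1), fun x => ?_⟩
  conv_lhs => rw [pi_eq_sum_univ' x]
  simp [dotProduct, mul_comm, Pi.single, Function.update_apply]

/-- for independent `X ~ N(x₀, Γ)` and `E ~ N(0, Σ)` with `Γ`, `Σ` symmetric positive
definite, and `B = Aᵀ X + E`, for (law of `B`)-almost every `b` the regular conditional
distribution of `X` given `B = b` is the Gaussian `N(x̄, C)` with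
`x̄ = x₀ + Γ A (Aᵀ Γ A + Σ)⁻¹ (b − Aᵀ x₀)` and `C = Γ − Γ A (Aᵀ Γ A + Σ)⁻¹ Aᵀ Γ`. -/
theorem posterior_gaussian_linear_model
    {Ω : Type*} [MeasurableSpace Ω] (Pr : Measure Ω) [IsProbabilityMeasure Pr]
    {n m : ℕ} (X : Ω → Fin n → ℝ) (E : Ω → Fin m → ℝ)
    (hX : Measurable X) (hE : Measurable E) (hXE : IndepFun X E Pr)
    (x₀ : Fin n → ℝ) (Γ : Matrix (Fin n) (Fin n) ℝ) (S : Matrix (Fin m) (Fin m) ℝ)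
    (hG : Γ.PosDef) (hS : S.PosDef)
    (hlawX : IsGaussianLaw (Measure.map X Pr) x₀ Γ)
    (hlawE : IsGaussianLaw (Measure.map E Pr) 0 S)
    (A : Matrix (Fin n) (Fin m) ℝ)
    (B : Ω → Fin m → ℝ) (hB : B = fun ω => Aᵀ *ᵥ X ω + E ω) :
    ∀ᵐ b ∂(Measure.map B Pr),
      IsGaussianLaw (condDistrib X B Pr b)
        (x₀ + (Γ * A * (Aᵀ * Γ * A + S)⁻¹) *ᵥ (b - Aᵀ *ᵥ x₀))
        (Γ - Γ * A * (Aᵀ * Γ * A + S)⁻¹ * Aᵀ * Γ) := by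
  have hGt : Γᵀ = Γ := by simpa using hG.isHermitian.eq
  have hSt : Sᵀ = S := by simpa using hS.isHermitian.eq
  obtain ⟨M, hM⟩ : ∃ M, M = Aᵀ * Γ * A + S := ⟨_, rfl⟩
  have hMpd : M.PosDef := by
    rw [hM]
    refine Matrix.PosDef.posSemidef_add ?_ hS
    simpa using hG.posSemidef.conjTranspose_mul_mul_same A
  have hu : IsUnit M.det := (Matrix.isUnit_iff_isUnit_det _).1 hMpd.isUnit
  rw [← hM]
  obtain ⟨K, hK⟩ : ∃ K, K = Γ * A * M⁻¹ := ⟨_, rfl⟩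
  rw [← hK]
  have hBm : Measurable B := by rw [hB]; fun_prop
  obtain ⟨R, hR⟩ : ∃ R : Ω → Fin n → ℝ, R = fun ω => X ω - K *ᵥ B ω := ⟨_, rfl⟩
  have hRm : Measurable R := by rw [hR]; fun_prop
  have adj : ∀ {k l : ℕ} (N : Matrix (Fin k) (Fin l) ℝ) (a : Fin k → ℝ) (b : Fin l → ℝ),
      a ⬝ᵥ N *ᵥ b = (Nᵀ *ᵥ a) ⬝ᵥ b := by
    intro k l N a b
    rw [Matrix.dotProduct_mulVec, Matrix.mulVec_transpose]
  -- joint characteristic function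
  have key : ∀ (t : Fin n → ℝ) (v : Fin m → ℝ),
      ∫ ω, Complex.exp (Complex.I * ((t ⬝ᵥ R ω + v ⬝ᵥ B ω : ℝ) : ℂ)) ∂Pr
        = Complex.exp (Complex.I * ((t ⬝ᵥ (x₀ - K *ᵥ (Aᵀ *ᵥ x₀)) : ℝ) : ℂ)
            - ((t ⬝ᵥ (Γ - K * Aᵀ * Γ) *ᵥ t : ℝ) : ℂ) / 2)
          * Complex.exp (Complex.I * ((v ⬝ᵥ (Aᵀ *ᵥ x₀) : ℝ) : ℂ)
            - ((v ⬝ᵥ M *ᵥ v : ℝ) : ℂ) / 2) := by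
    intro t v
    obtain ⟨w, hw⟩ : ∃ w, w = v - Kᵀ *ᵥ t := ⟨_, rfl⟩
    have e0 : ∀ b, t ⬝ᵥ (K *ᵥ b) = v ⬝ᵥ b - w ⬝ᵥ b := by
      intro b; rw [hw, adj, sub_dotProduct]; ring
    have e1 : ∀ x, w ⬝ᵥ (Aᵀ *ᵥ x) = (A *ᵥ w) ⬝ᵥ x := by
      intro x; rw [adj, Matrix.transpose_transpose]
    have h := pglm_joint Pr X E hX hE hXE x₀ Γ S hlawX hlawE (t + A *ᵥ w) w
    have h1 : ∀ ω, t ⬝ᵥ R ω + v ⬝ᵥ B ω = (t + A *ᵥ w) ⬝ᵥ X ω + w ⬝ᵥ E ω := by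
      intro ω
      have : w ⬝ᵥ B ω = (A *ᵥ w) ⬝ᵥ X ω + w ⬝ᵥ E ω := by
        rw [hB, dotProduct_add, e1]
      rw [hR, dotProduct_sub, e0, this, add_dotProduct]; ring
    simp_rw [h1]
    rw [h, pglm_quad Γ S hGt hSt A M hM hu K hK t v w hw, ← Complex.exp_add]
    have h2 : (t + A *ᵥ w) ⬝ᵥ x₀ = t ⬝ᵥ (x₀ - K *ᵥ (Aᵀ *ᵥ x₀)) + v ⬝ᵥ (Aᵀ *ᵥ x₀) := by
      rw [dotProduct_sub, e0, e1, add_dotProduct]; ring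
    rw [h2]
    push_cast
    ring_nf
  have keyR := fun t => key t 0
  have keyB := fun v => key 0 v
  simp only [zero_dotProduct, add_zero, zero_add, Complex.ofReal_zero, mul_zero, zero_div,
    sub_zero, Complex.exp_zero, mul_one, one_mul] at keyR keyB
  have hind : IndepFun B R Pr := by
    rw [indepFun_iff_charFunDual_prod hBm.aemeasurable hRm.aemeasurable]
    intro L
    obtain ⟨v, hv⟩ := pglm_dual (L.comp (.inl ℝ (Fin m → ℝ) (Fin n → ℝ)))
    obtain ⟨t, ht⟩ := pglm_dual (L.comp (.inr ℝ (Fin m → ℝ) (Fin n → ℝ)))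
    have hL : ∀ ω, L (B ω, R ω) = t ⬝ᵥ R ω + v ⬝ᵥ B ω := by
      intro ω
      rw [← hv, ← ht, ContinuousLinearMap.comp_apply, ContinuousLinearMap.comp_apply, ← map_add]
      simp
    simp only [charFunDual_apply]
    rw [integral_map (by fun_prop) (by fun_prop), integral_map (by fun_prop) (by fun_prop),
      integral_map (by fun_prop) (by fun_prop)]
    simp only [hL, hv, ht, mul_comm _ Complex.I]
    rw [key, keyR, keyB, mul_comm]
  -- the kernel
  have : IsProbabilityMeasure (Pr.map R) := Measure.isProbabilityMeasure_map hRm.aemeasurable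
  have : IsProbabilityMeasure (Pr.map B) := Measure.isProbabilityMeasure_map hBm.aemeasurable
  let f : (Fin m → ℝ) × (Fin n → ℝ) → (Fin n → ℝ) := fun p => p.2 + K *ᵥ p.1
  have hf : Measurable f := by fun_prop
  let κ : Kernel (Fin m → ℝ) (Fin n → ℝ) := (Kernel.id ×ₖ Kernel.const _ (Pr.map R)).map f
  have hκ : ∀ b, κ b = (Pr.map R).map (fun r => r + K *ᵥ b) := by
    intro b
    rw [Kernel.map_apply _ hf, Kernel.prod_apply, Kernel.id_apply, Kernel.const_apply,
      Measure.dirac_prod, Measure.map_map hf (by fun_prop)]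
    rfl
  have hjoint : Pr.map (fun ω => (B ω, X ω)) = (Pr.map B) ⊗ₘ κ := by
    have h1 := (indepFun_iff_map_prod_eq_prod_map_map hBm.aemeasurable hRm.aemeasurable).1 hind
    have hg : Measurable fun p : (Fin m → ℝ) × (Fin n → ℝ) => (p.1, f p) := by fun_prop
    have h2 : (fun ω => (B ω, X ω)) = (fun p => (p.1, f p)) ∘ fun ω => (B ω, R ω) := by
      funext ω; simp [f, hR]
    rw [h2, ← Measure.map_map hg (by fun_prop), h1]
    ext s hs
    rw [Measure.map_apply hg hs, Measure.prod_apply (hg hs), Measure.compProd_apply hs]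
    refine lintegral_congr fun b => ?_
    have hadd : Measurable fun r : Fin n → ℝ => r + K *ᵥ b := by fun_prop
    rw [hκ, Measure.map_apply hadd (measurable_prodMk_left hs)]
    rfl
  have hcd := condDistrib_ae_eq_of_measure_eq_compProd B hX.aemeasurable hjoint
  filter_upwards [hcd] with b hb
  rw [hb, hκ]
  refine ⟨Measure.isProbabilityMeasure_map (by fun_prop), fun t => ?_⟩
  rw [integral_map (by fun_prop) (by fun_prop), integral_map (by fun_prop) (by fun_prop)]
  have h1 : ∀ ω, Complex.exp (Complex.I * ((t ⬝ᵥ (R ω + K *ᵥ b) : ℝ) : ℂ))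
      = Complex.exp (Complex.I * ((t ⬝ᵥ R ω : ℝ) : ℂ))
        * Complex.exp (Complex.I * ((t ⬝ᵥ K *ᵥ b : ℝ) : ℂ)) := by
    intro ω
    rw [← Complex.exp_add, dotProduct_add]; push_cast; ring_nf
  simp_rw [h1]
  rw [integral_mul_const, keyR, ← Complex.exp_add, Matrix.mulVec_sub]
  simp only [dotProduct_add, dotProduct_sub]
  push_cast
  ring_nf
end

section
/- Let H and K be real separable Hilbert spaces, A : K → H a continuous linear map, φ_1, …, φ_n ∈ H and ψ_1, …, ψ_m ∈ K. Let X : Ω → H and E : Ω → K be independent random variables whose laws are centered Gaussian measures on H and K with covariance operators C_X : H → H and C_E : K → K respectively, i.e., E[⟪u, X⟫⟪v, X⟫] = ⟪u, C_X v⟫ for all u, v ∈ H and E[⟪ψ, E⟫⟪ψ', E⟫] = ⟪ψ, C_E ψ'⟫ for all ψ, ψ' ∈ K. Define the random vectors M ∈ ℝ^n by M_j = ⟪φ_j, X⟫ and Z ∈ ℝ^m by Z_k = ⟪A ψ_k, X⟫ + ⟪ψ_k, E⟫, and the matrices C11_{jk} = ⟪φ_j, C_X φ_k⟫, C12_{jk}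 = ⟪φ_j, C_X A ψ_k⟫, C21 = C12ᵀ, and C22_{jk} = ⟪A ψ_j, C_X A ψ_k⟫ + ⟪ψ_j, C_E ψ_k⟫. If C22 is invertible, then for (law of Z)-almost every z ∈ ℝ^m, the regular conditional distribution of M given Z = z is the multivariate Gaussian with mean C12 (C22)⁻¹ z and covariance matrix C11 − C12 (C22)⁻¹ C21. -/
open MeasureTheory ProbabilityTheory Matrix
open scoped RealInnerProductSpace

/-- A centered Gaussian measure on a real inner product space: every one-dimensional projection
`x ↦ ⟪u, x⟫` has a centered real Gaussian law. -/
def IsCenteredGaussianMeasure {H : Type*} [NormedAddCommGroup H] [InnerProductSpace ℝ H]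
    [MeasurableSpace H] (μ : Measure H) : Prop :=
  IsProbabilityMeasure μ ∧
    ∀ u : H, ∃ v : NNReal, Measure.map (fun x => ⟪u, x⟫) μ = gaussianReal 0 v

/-- Conditional distribution of a jointly Gaussian vector, abstract finite-dimensional version. -/
lemma posterior_aux {Ω : Type*} [MeasurableSpace Ω] (Pr : Measure Ω) [IsProbabilityMeasure Pr]
    {n m : ℕ} (M : Ω → Fin n → ℝ) (Z : Ω → Fin m → ℝ) (hMm : Measurable M) (hZm : Measurable Z)
    (hG : HasGaussianLaw (fun ω => (M ω, Z ω)) Pr)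
    (hM0 : ∀ j, ∫ ω, M ω j ∂Pr = 0) (hZ0 : ∀ j, ∫ ω, Z ω j ∂Pr = 0)
    (C11 : Matrix (Fin n) (Fin n) ℝ) (C12 : Matrix (Fin n) (Fin m) ℝ)
    (C22 : Matrix (Fin m) (Fin m) ℝ)
    (hC11 : ∀ j k, cov[fun ω => M ω j, fun ω => M ω k; Pr] = C11 j k)
    (hC12 : ∀ j k, cov[fun ω => M ω j, fun ω => Z ω k; Pr] = C12 j k)
    (hC22 : ∀ j k, cov[fun ω => Z ω j, fun ω => Z ω k; Pr] = C22 j k)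
    (hInv : IsUnit C22.det) :
    ∀ᵐ z ∂(Measure.map Z Pr),
      IsGaussianLaw (condDistrib M Z Pr z) ((C12 * C22⁻¹) *ᵥ z)
        (C11 - C12 * C22⁻¹ * C12ᵀ) := by
  set G := C12 * C22⁻¹ with hGdef
  have hGC : G * C22 = C12 := by
    rw [hGdef, Matrix.mul_assoc, Matrix.nonsing_inv_mul _ hInv, Matrix.mul_one]
  have hM2 : ∀ j, MemLp (fun ω => M ω j) 2 Pr := fun j => (hG.fst.eval j).memLp_two
  have hZ2 : ∀ j, MemLp (fun ω => Z ω j) 2 Pr := fun j => (hG.snd.eval j).memLp_two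
  have hGZ2 : ∀ j, MemLp (fun ω => ∑ k, G j k * Z ω k) 2 Pr := fun j =>
    memLp_finsetSum _ fun k _ => (hZ2 k).const_mul _
  let R : Fin n → Ω → ℝ := fun j ω => M ω j - ∑ k, G j k * Z ω k
  have hR2 : ∀ j, MemLp (R j) 2 Pr := fun j => (hM2 j).sub (hGZ2 j)
  have hRm : Measurable (fun ω j => R j ω) := by
    refine measurable_pi_lambda _ fun j => ?_
    exact ((measurable_pi_apply j).comp hMm).sub
      (Finset.measurable_sum _ fun k _ => ((measurable_pi_apply k).comp hZm).const_mul _)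
  have hRZ : ∀ j l, cov[R j, fun ω => Z ω l; Pr] = 0 := by
    intro j l
    have h1 := covariance_fun_sub_left (hM2 j) (hGZ2 j) (hZ2 l)
    rw [covariance_fun_sum_left (fun k => (hZ2 k).const_mul _) (hZ2 l)] at h1
    simp only [covariance_const_mul_left, hC12, hC22] at h1
    change cov[R j, fun ω => Z ω l; Pr] = _ at h1
    rw [h1, ← hGC, Matrix.mul_apply, sub_self]
  have hRM : ∀ i j, cov[R i, fun ω => M ω j; Pr] = (C11 - G * C12ᵀ) i j := by
    intro i j
    have h1 := covariance_fun_sub_left (hM2 i) (hGZ2 i) (hM2 j)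
    rw [covariance_fun_sum_left (fun k => (hZ2 k).const_mul _) (hM2 j)] at h1
    simp only [covariance_const_mul_left, covariance_comm (fun ω => Z ω _) (fun ω => M ω _),
      hC12, hC11] at h1
    change cov[R i, fun ω => M ω j; Pr] = _ at h1
    rw [h1, Matrix.sub_apply, Matrix.mul_apply]
    rfl
  have hRR : ∀ i j, cov[R i, R j; Pr] = (C11 - G * C12ᵀ) i j := by
    intro i j
    have h1 := covariance_fun_sub_right (hR2 i) (hM2 j) (hGZ2 j)
    rw [covariance_fun_sum_right (fun k => (hZ2 k).const_mul _) (hR2 i)] at h1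
    simp only [covariance_const_mul_right, hRZ, hRM, mul_zero, Finset.sum_const_zero,
      sub_zero] at h1
    exact h1
  -- joint Gaussianity
  let gainL : (Fin m → ℝ) →L[ℝ] (Fin n → ℝ) := LinearMap.toContinuousLinearMap (Matrix.mulVecLin G)
  let L : ((Fin n → ℝ) × (Fin m → ℝ)) →L[ℝ] ((Fin n → ℝ) × (Fin m → ℝ)) :=
    (ContinuousLinearMap.fst ℝ _ _ - gainL.comp (ContinuousLinearMap.snd ℝ _ _)).prod
      (ContinuousLinearMap.snd ℝ _ _)
  have hRG : HasGaussianLaw (fun ω => (fun i => R i ω, fun j => Z ω j)) Pr := by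
    have h := hG.map_fun L
    exact h
  have hind : IndepFun (fun ω i => R i ω) (fun ω j => Z ω j) Pr :=
    hRG.indepFun_of_covariance_eval (X := R) (Y := fun j ω => Z ω j) hRZ
  let μR : Measure (Fin n → ℝ) := Pr.map (fun ω i => R i ω)
  have hμR : IsProbabilityMeasure μR := Measure.isProbabilityMeasure_map hRm.aemeasurable
  have hμZ : IsProbabilityMeasure (Pr.map Z) := Measure.isProbabilityMeasure_map hZm.aemeasurable
  have hf : Measurable (fun p : (Fin m → ℝ) × (Fin n → ℝ) => p.2 + gainL p.1) := by fun_prop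
  let κ : Kernel (Fin m → ℝ) (Fin n → ℝ) :=
    ((Kernel.id : Kernel (Fin m → ℝ) (Fin m → ℝ)) ×ₖ Kernel.const _ μR).map
      (fun p => p.2 + gainL p.1)
  have hκM : IsMarkovKernel κ := Kernel.IsMarkovKernel.map _ hf
  have hκ : ∀ z, κ z = μR.map (fun r => r + gainL z) := by
    intro z
    simp only [κ]
    rw [Kernel.map_apply _ hf, Kernel.prod_apply, Kernel.id_apply, Kernel.const_apply,
      Measure.dirac_prod, Measure.map_map hf (by fun_prop)]
    rfl
  have hcond : condDistrib M Z Pr =ᵐ[Pr.map Z] κ := by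
    refine condDistrib_ae_eq_of_measure_eq_compProd Z hMm.aemeasurable ?_
    have hT : Measurable (fun p : (Fin m → ℝ) × (Fin n → ℝ) => (p.1, p.2 + gainL p.1)) := by fun_prop
    have h1 : Pr.map (fun ω => (Z ω, M ω)) = ((Pr.map Z).prod μR).map
        (fun p : (Fin m → ℝ) × (Fin n → ℝ) => (p.1, p.2 + gainL p.1)) := by
      have h2 := (indepFun_iff_map_prod_eq_prod_map_map hZm.aemeasurable hRm.aemeasurable).1
        hind.symm
      rw [← h2, Measure.map_map hT (hZm.prodMk hRm)]
      congr 1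
      ext ω i
      · rfl
      · change M ω i = (M ω i - ∑ k, G i k * Z ω k) + ∑ k, G i k * Z ω k
        ring
    rw [h1]
    ext s hs
    rw [Measure.map_apply hT hs, Measure.prod_apply (hT hs), Measure.compProd_apply hs]
    refine lintegral_congr fun z => ?_
    rw [hκ, Measure.map_apply (by fun_prop) (measurable_prodMk_left hs)]
    rfl
  filter_upwards [hcond] with z hz
  rw [hz]
  refine ⟨inferInstance, fun t => ?_⟩
  rw [hκ, integral_map (by fun_prop) (by fun_prop), integral_map (by fun_prop) (by fun_prop)]
  -- the scalar projection
  let S : Ω → ℝ := fun ω => ∑ j, t j * R j ω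
  have hSG : HasGaussianLaw S Pr := by
    have h := hRG.fst.map_fun (LinearMap.toContinuousLinearMap
      (∑ j, t j • (LinearMap.proj j : (Fin n → ℝ) →ₗ[ℝ] ℝ)))
    refine h.congr (Filter.Eventually.of_forall fun ω => ?_)
    simp [S]
  have hS0 : ∫ ω, S ω ∂Pr = 0 := by
    simp only [S, R]
    rw [integral_finsetSum _ fun j _ => ((hR2 j).integrable (by norm_num)).const_mul _]
    refine Finset.sum_eq_zero fun j _ => ?_
    rw [integral_const_mul, integral_sub ((hM2 j).integrable (by norm_num))
      ((hGZ2 j).integrable (by norm_num)),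
      integral_finsetSum _ fun k _ => ((hZ2 k).integrable (by norm_num)).const_mul _]
    simp [integral_const_mul, hM0, hZ0]
  have hSV : Var[S; Pr] = t ⬝ᵥ (C11 - G * C12ᵀ) *ᵥ t := by
    rw [← covariance_self hSG.aemeasurable]
    simp only [S]
    rw [covariance_fun_sum_fun_sum (fun j => (hR2 j).const_mul _) (fun j => (hR2 j).const_mul _)]
    simp only [covariance_const_mul_left, covariance_const_mul_right, dotProduct, mulVec,
      Finset.mul_sum]
    refine Finset.sum_congr rfl fun i _ => Finset.sum_congr rfl fun j _ => ?_
    rw [show cov[fun ω => R i ω, fun ω => R j ω; Pr] = _ from hRR i j]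
    ring
  have hchar : ∫ ω, Complex.exp (Complex.I * ((S ω : ℝ) : ℂ)) ∂Pr =
      Complex.exp (- ((t ⬝ᵥ (C11 - G * C12ᵀ) *ᵥ t : ℝ) : ℂ) / 2) := by
    have h := charFun_gaussianReal (μ := Pr[S]) (v := Var[S; Pr].toNNReal) 1
    rw [← hSG.map_eq_gaussianReal, charFun_apply_real,
      integral_map hSG.aemeasurable (by fun_prop), hS0, Real.coe_toNNReal _ (variance_nonneg _ _),
      hSV] at h
    simp only [Complex.ofReal_one, one_mul, Complex.ofReal_zero, mul_zero, zero_mul, one_pow,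
      mul_one, zero_sub] at h
    simp only [mul_comm Complex.I]
    rw [h, neg_div]
  have hpt : ∀ ω, Complex.exp (Complex.I * ((t ⬝ᵥ ((fun i => R i ω) + gainL z) : ℝ) : ℂ)) =
      Complex.exp (Complex.I * ((t ⬝ᵥ G *ᵥ z : ℝ) : ℂ)) *
        Complex.exp (Complex.I * ((S ω : ℝ) : ℂ)) := by
    intro ω
    rw [← Complex.exp_add, dotProduct_add]
    congr 1
    change Complex.I * (((S ω) + (t ⬝ᵥ G *ᵥ z) : ℝ) : ℂ) = _
    push_cast
    ring
  simp_rw [hpt]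
  rw [integral_const_mul, hchar, ← Complex.exp_add]
  congr 1
  ring

/-- A measurable map whose law is a centered Gaussian measure has a Gaussian law, and its
projections have mean zero. -/
lemma centered_aux {Ω : Type*} [MeasurableSpace Ω] (Pr : Measure Ω) [IsProbabilityMeasure Pr]
    {H : Type*} [NormedAddCommGroup H] [InnerProductSpace ℝ H] [CompleteSpace H]
    [MeasurableSpace H] [BorelSpace H] (X : Ω → H) (hX : Measurable X)
    (hlaw : IsCenteredGaussianMeasure (Measure.map X Pr)) :
    HasGaussianLaw X Pr ∧ ∀ u : H, ∫ ω, ⟪u, X ω⟫ ∂Pr = 0 := by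
  constructor
  · refine ⟨isGaussian_of_map_eq_gaussianReal fun L => ?_⟩
    obtain ⟨v, hv⟩ := hlaw.2 ((InnerProductSpace.toDual ℝ H).symm L)
    refine ⟨0, v, ?_⟩
    rw [← hv]
    congr 1
    ext x
    simp
  · intro u
    obtain ⟨v, hv⟩ := hlaw.2 u
    have h := integral_id_gaussianReal (μ := 0) (v := v)
    rw [← hv, integral_map (by fun_prop) (by fun_prop), integral_map hX.aemeasurable (by fun_prop)] at h
    exact h

/-- posterior distribution of the finite measurement `M = Φ(X)` given the finite
indirect data `Z = Ψ(B)` in the model `B = A* X + E`: if the laws of `X` and `E` are centered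
Gaussian with covariance operators `C_X`, `C_E`, and `C22` is invertible, then for
(law of `Z`)-almost every `z` the regular conditional distribution of `M` given `Z = z` is the
Gaussian with mean `C12 C22⁻¹ z` and covariance `C11 − C12 C22⁻¹ C12ᵀ`. -/
theorem posterior_of_finite_measurements
    {Ω : Type*} [MeasurableSpace Ω] (Pr : Measure Ω) [IsProbabilityMeasure Pr]
    {H K : Type*}
    [NormedAddCommGroup H] [InnerProductSpace ℝ H] [CompleteSpace H]
    [TopologicalSpace.SeparableSpace H]
    [NormedAddCommGroup K] [InnerProductSpace ℝ K] [CompleteSpace K]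
    [TopologicalSpace.SeparableSpace K]
    [MeasurableSpace H] [BorelSpace H] [MeasurableSpace K] [BorelSpace K]
    (A : K →L[ℝ] H) {n m : ℕ} (φ : Fin n → H) (ψ : Fin m → K)
    (X : Ω → H) (E : Ω → K)
    (hX : Measurable X) (hE : Measurable E) (hXE : IndepFun X E Pr)
    (hlawX : IsCenteredGaussianMeasure (Measure.map X Pr))
    (hlawE : IsCenteredGaussianMeasure (Measure.map E Pr))
    (CX : H →L[ℝ] H) (CE : K →L[ℝ] K)
    (hCX : ∀ u v : H, ∫ ω, ⟪u, X ω⟫ * ⟪v, X ω⟫ ∂Pr = ⟪u, CX v⟫)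
    (hCE : ∀ w w' : K, ∫ ω, ⟪w, E ω⟫ * ⟪w', E ω⟫ ∂Pr = ⟪w, CE w'⟫)
    (M : Ω → Fin n → ℝ) (hM : M = fun ω j => ⟪φ j, X ω⟫)
    (Z : Ω → Fin m → ℝ) (hZ : Z = fun ω k => ⟪A (ψ k), X ω⟫ + ⟪ψ k, E ω⟫)
    (C11 : Matrix (Fin n) (Fin n) ℝ) (hC11 : ∀ j k, C11 j k = ⟪φ j, CX (φ k)⟫)
    (C12 : Matrix (Fin n) (Fin m) ℝ) (hC12 : ∀ j k, C12 j k = ⟪φ j, CX (A (ψ k))⟫)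
    (C22 : Matrix (Fin m) (Fin m) ℝ)
    (hC22 : ∀ j k, C22 j k = ⟪A (ψ j), CX (A (ψ k))⟫ + ⟪ψ j, CE (ψ k)⟫)
    (hInv : IsUnit C22.det) :
    ∀ᵐ z ∂(Measure.map Z Pr),
      IsGaussianLaw (condDistrib M Z Pr z) ((C12 * C22⁻¹) *ᵥ z)
        (C11 - C12 * C22⁻¹ * C12ᵀ) := by
  have hsX : SecondCountableTopology H := UniformSpace.secondCountable_of_separable H
  have hsK : SecondCountableTopology K := UniformSpace.secondCountable_of_separable K
  obtain ⟨gX, mX⟩ := centered_aux Pr X hX hlawX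
  obtain ⟨gE, mE⟩ := centered_aux Pr E hE hlawE
  have gXE : HasGaussianLaw (fun ω => (X ω, E ω)) Pr := hXE.hasGaussianLaw gX gE
  have l2X : ∀ u : H, MemLp (fun ω => ⟪u, X ω⟫) 2 Pr := fun u =>
    (gX.map_fun (innerSL ℝ u)).memLp_two
  have l2E : ∀ u : K, MemLp (fun ω => ⟪u, E ω⟫) 2 Pr := fun u =>
    (gE.map_fun (innerSL ℝ u)).memLp_two
  have cXX : ∀ u v : H, cov[fun ω => ⟪u, X ω⟫, fun ω => ⟪v, X ω⟫; Pr] = ⟪u, CX v⟫ := by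
    intro u v
    rw [covariance_eq_sub (l2X u) (l2X v), mX, zero_mul, sub_zero, ← hCX]
    rfl
  have cEE : ∀ u v : K, cov[fun ω => ⟪u, E ω⟫, fun ω => ⟪v, E ω⟫; Pr] = ⟪u, CE v⟫ := by
    intro u v
    rw [covariance_eq_sub (l2E u) (l2E v), mE, zero_mul, sub_zero, ← hCE]
    rfl
  have cXE : ∀ (u : H) (v : K), cov[fun ω => ⟪u, X ω⟫, fun ω => ⟪v, E ω⟫; Pr] = 0 := by
    intro u v
    have hi : IndepFun (fun ω => ⟪u, X ω⟫) (fun ω => ⟪v, E ω⟫) Pr :=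
      hXE.comp (φ := fun x => ⟪u, x⟫) (ψ := fun x => ⟪v, x⟫) (by fun_prop) (by fun_prop)
    exact hi.covariance_eq_zero (l2X u) (l2E v)
  have hMm : Measurable M := by
    rw [hM]; fun_prop
  have hZm : Measurable Z := by
    rw [hZ]; fun_prop
  have l2Z : ∀ k, MemLp (fun ω => ⟪A (ψ k), X ω⟫ + ⟪ψ k, E ω⟫) 2 Pr := fun k =>
    (l2X _).add (l2E _)
  refine posterior_aux Pr M Z hMm hZm ?_ ?_ ?_ C11 C12 C22 ?_ ?_ ?_ hInv
  · let L : (H × K) →L[ℝ] ((Fin n → ℝ) × (Fin m → ℝ)) :=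
      (ContinuousLinearMap.pi fun j => (innerSL ℝ (φ j)).comp (ContinuousLinearMap.fst ℝ H K)).prod
        (ContinuousLinearMap.pi fun k =>
          (innerSL ℝ (A (ψ k))).comp (ContinuousLinearMap.fst ℝ H K) +
          (innerSL ℝ (ψ k)).comp (ContinuousLinearMap.snd ℝ H K))
    have h := gXE.map_fun L
    subst hM hZ
    exact h
  · intro j
    subst hM
    exact mX _
  · intro k
    subst hZ
    change ∫ ω, (⟪A (ψ k), X ω⟫ + ⟪ψ k, E ω⟫) ∂Pr = 0
    rw [integral_add ((l2X _).integrable (by norm_num)) ((l2E _).integrable (by norm_num)), mX, mE,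
      add_zero]
  · intro j k
    subst hM
    rw [hC11]
    exact cXX _ _
  · intro j k
    subst hM hZ
    rw [hC12]
    have h := covariance_add_right (l2X (φ j)) (l2X (A (ψ k))) (l2E (ψ k))
    rw [cXX, cXE, add_zero] at h
    exact h
  · intro j k
    subst hZ
    rw [hC22]
    have h := covariance_add_left (l2X (A (ψ j))) (l2E (ψ j)) (l2Z k)
    have h1 := covariance_add_right (l2X (A (ψ j))) (l2X (A (ψ k))) (l2E (ψ k))
    have h2 := covariance_add_right (l2E (ψ j)) (l2X (A (ψ k))) (l2E (ψ k))
    rw [cXX, cXE, add_zero] at h1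
    rw [cEE, covariance_comm (fun ω => ⟪ψ j, E ω⟫) (fun ω => ⟪A (ψ k), X ω⟫), cXE, zero_add] at h2
    refine h.trans ?_
    rw [← h1, ← h2]
    rfl
end
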